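/- Fix an integer d ≥ 4 and set β = d/2 − 2. There exist a constant c > 0 and an integer N such that for all n ≥ N: Var(f₀(Qₙ)) ≤ c·(log n)^{3 − 1/(d−1)}·n^{1/(d−1)}, where Qₙ is the convex hull of n i.i.d. points with law μ_β and f₀(Qₙ) is its number of extreme points. -/

import Mathlib

open MeasureTheory

/-- The `β`-distribution on the closed unit disk of `ℝ²`. -/
noncomputable def betaMeasure (β : ℝ) : Measure (EuclideanSpace ℝ (Fin 2)) :=
  volume.withDensity fun x =>
    ENNReal.ofReal (if ‖x‖ ≤ 1 then (β + 1) / Real.pi * (1 - ‖x‖ ^ 2) ^ β else 0)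

instance (β : ℝ) : SigmaFinite (betaMeasure β) :=
  SigmaFinite.withDensity_ofReal _

/-- The joint law of `n` i.i.d. points with law `μ_β`, realized on `(ℝ²)ⁿ`. -/
noncomputable def betaPi (β : ℝ) (n : ℕ) :
    Measure (Fin n → EuclideanSpace ℝ (Fin 2)) :=
  Measure.pi fun _ => betaMeasure β

/-- The number of vertices (extreme points) of the convex hull `Qₙ`, as a real. -/
noncomputable def vertCount {n : ℕ} (ω : Fin n → EuclideanSpace ℝ (Fin 2)) : ℝ :=
  Nat.card (Set.extremePoints ℝ (convexHull ℝ (Set.range ω)))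

/-- `E[f₀(Qₙ)]`. -/
noncomputable def meanF0 (β : ℝ) (n : ℕ) : ℝ :=
  ∫ ω, vertCount ω ∂ betaPi β n

/-- `Var(f₀(Qₙ)) = E[f₀(Qₙ)²] - (E[f₀(Qₙ)])²`. -/
noncomputable def varF0 (β : ℝ) (n : ℕ) : ℝ :=
  (∫ ω, vertCount ω ^ 2 ∂ betaPi β n) - meanF0 β n ^ 2

/-!
By the Efron–Stein inequality, the variance of the vertex count is at most the sum over `k` of the
mean square change of the count when the `k`-th point is discarded. If every cap of height `h` of
the disk contains one of the other points, all vertices lie in the annulus of width `h`, and a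
vertex gained or lost shares a cap of height `h` with the discarded point. The change is then at
most the number of points within distance `√(8h)` of the discarded one, and it vanishes unless the
latter lies in the annulus. For the `β`-distribution a cap of height `h` has mass of order
`h ^ (β + 3 / 2)` and the annulus has mass of order `h ^ (β + 1)`. With `n * h ^ (β + 3 / 2)` a
large multiple of `log n`, some cap is empty only with polynomially small probability, and the sum
is of order `n * h ^ (β + 1) * (log n) ^ 2`, which is the claimed rate.
-/

open Set
open scoped ENNReal ProbabilityTheory RealInnerProductSpace

section EfronStein

variable {X Y : Type*} [MeasurableSpace X] [MeasurableSpace Y] {μ : Measure X} {ν : Measure Y}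

lemma ae_memLp_two_prodMk [SFinite μ] [SFinite ν] {F : X × Y → ℝ} (hF : MemLp F 2 (μ.prod ν)) :
    ∀ᵐ x ∂μ, MemLp (fun y => F (x, y)) 2 ν := by
  filter_upwards [hF.1.prodMk_left, hF.integrable_sq.prod_right_ae] with x hmeas hint
  exact (memLp_two_iff_integrable_sq hmeas).2 hint

lemma sq_integral_le_integral_sq [IsProbabilityMeasure μ] {f : X → ℝ} (hf : MemLp f 2 μ) :
    (∫ x, f x ∂μ) ^ 2 ≤ ∫ x, f x ^ 2 ∂μ := by
  have h := ProbabilityTheory.variance_nonneg f μ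
  rw [ProbabilityTheory.variance_eq_sub hf] at h
  simpa using h

lemma memLp_two_integral_prodMk [SFinite μ] [IsProbabilityMeasure ν] {F : X × Y → ℝ}
    (hF : MemLp F 2 (μ.prod ν)) : MemLp (fun x => ∫ y, F (x, y) ∂ν) 2 μ := by
  have hmeas : AEStronglyMeasurable (fun x => ∫ y, F (x, y) ∂ν) μ := hF.1.integral_prod_right'
  refine (memLp_two_iff_integrable_sq hmeas).2
    (hF.integrable_sq.integral_prod_left.mono' (hmeas.pow 2) ?_)
  filter_upwards [ae_memLp_two_prodMk hF] with x hx
  rw [Real.norm_of_nonneg (sq_nonneg _)]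
  exact sq_integral_le_integral_sq hx

variable [IsProbabilityMeasure ν]

lemma ae_variance_prodMk_eq [SFinite μ] {F : X × Y → ℝ} (hF : MemLp F 2 (μ.prod ν)) :
    (fun x => Var[fun y => F (x, y); ν]) =ᵐ[μ]
      fun x => ∫ y, F (x, y) ^ 2 ∂ν - (∫ y, F (x, y) ∂ν) ^ 2 := by
  filter_upwards [ae_memLp_two_prodMk hF] with x hx
  simpa using ProbabilityTheory.variance_eq_sub hx

lemma integrable_variance_prodMk [SFinite μ] {F : X × Y → ℝ} (hF : MemLp F 2 (μ.prod ν)) :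
    Integrable (fun x => Var[fun y => F (x, y); ν]) μ :=
  (hF.integrable_sq.integral_prod_left.sub (memLp_two_integral_prodMk hF).integrable_sq).congr
    (ae_variance_prodMk_eq hF).symm

variable [IsProbabilityMeasure μ]

lemma variance_prod_eq_add {F : X × Y → ℝ} (hF : MemLp F 2 (μ.prod ν)) :
    Var[F; μ.prod ν] =
      Var[fun x => ∫ y, F (x, y) ∂ν; μ] + ∫ x, Var[fun y => F (x, y); ν] ∂μ := by
  have hm := memLp_two_integral_prodMk hF
  rw [integral_congr_ae (ae_variance_prodMk_eq hF),
    integral_sub hF.integrable_sq.integral_prod_left hm.integrable_sq,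
    ProbabilityTheory.variance_eq_sub hF, ProbabilityTheory.variance_eq_sub hm]
  simp only [Pi.pow_apply, integral_prod _ hF.integrable_sq,
    integral_prod _ (hF.integrable one_le_two)]
  ring

lemma variance_integral_prodMk_le {F : X × Y → ℝ} (hF : MemLp F 2 (μ.prod ν)) {G : Y → ℝ}
    (hG : MemLp G 2 ν) :
    Var[fun x => ∫ y, F (x, y) ∂ν; μ] ≤ ∫ z, (F z - G z.2) ^ 2 ∂μ.prod ν := by
  have hm := memLp_two_integral_prodMk hF
  have hFG : MemLp (fun z => F z - G z.2) 2 (μ.prod ν) := hF.sub (hG.comp_snd μ)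
  calc Var[fun x => ∫ y, F (x, y) ∂ν; μ]
      = Var[fun x => ∫ y, F (x, y) ∂ν - ∫ y, G y ∂ν; μ] :=
        (ProbabilityTheory.variance_sub_const hm.1 _).symm
    _ ≤ ∫ x, (∫ y, F (x, y) ∂ν - ∫ y, G y ∂ν) ^ 2 ∂μ :=
        ProbabilityTheory.variance_le_expectation_sq (hm.1.sub aestronglyMeasurable_const)
    _ ≤ ∫ x, ∫ y, (F (x, y) - G y) ^ 2 ∂ν ∂μ := by
        refine integral_mono_ae (hm.sub (memLp_const _)).integrable_sq
          hFG.integrable_sq.integral_prod_left ?_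
        filter_upwards [ae_memLp_two_prodMk hF] with x hx
        have h := sq_integral_le_integral_sq (hx.sub hG)
        simp only [Pi.sub_apply] at h
        rwa [integral_sub (hx.integrable one_le_two) (hG.integrable one_le_two)] at h
    _ = ∫ z, (F z - G z.2) ^ 2 ∂μ.prod ν := (integral_prod _ hFG.integrable_sq).symm

lemma variance_prod_le_add_sum {ι : Type*} [Fintype ι] {F : X × Y → ℝ}
    (hF : MemLp F 2 (μ.prod ν)) {G : Y → ℝ} (hG : MemLp G 2 ν) {H : ι → X × Y → ℝ}
    (hH : ∀ k, MemLp (H k) 2 (μ.prod ν))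
    (hsection : ∀ᵐ x ∂μ, Var[fun y => F (x, y); ν] ≤ ∑ k, ∫ y, (F (x, y) - H k (x, y)) ^ 2 ∂ν) :
    Var[F; μ.prod ν] ≤ ∫ z, (F z - G z.2) ^ 2 ∂μ.prod ν +
      ∑ k, ∫ z, (F z - H k z) ^ 2 ∂μ.prod ν := by
  have hFH (k) : Integrable (fun z => (F z - H k z) ^ 2) (μ.prod ν) := (hF.sub (hH k)).integrable_sq
  rw [variance_prod_eq_add hF]
  refine add_le_add (variance_integral_prodMk_le hF hG) ?_
  calc ∫ x, Var[fun y => F (x, y); ν] ∂μ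
      ≤ ∫ x, ∑ k, ∫ y, (F (x, y) - H k (x, y)) ^ 2 ∂ν ∂μ :=
        integral_mono_ae (integrable_variance_prodMk hF)
          (integrable_finsetSum _ fun k _ => (hFH k).integral_prod_left) hsection
    _ = ∑ k, ∫ z, (F z - H k z) ^ 2 ∂μ.prod ν := by
        simp_rw [integral_finsetSum _ fun k _ => (hFH k).integral_prod_left,
          integral_prod _ (hFH _)]

section Fin

variable {n : ℕ} {Ω : Fin (n + 1) → Type*}

lemma piFinSuccAbove_symm_apply [∀ i, MeasurableSpace (Ω i)] (k : Fin (n + 1)) (x : Ω k)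
    (y : ∀ i, Ω (k.succAbove i)) :
    (MeasurableEquiv.piFinSuccAbove Ω k).symm (x, y) = k.insertNth x y := rfl

lemma insertNth_congr_of_dependsOn_compl {α : Type*} {k : Fin (n + 1)} {g : (∀ i, Ω i) → α}
    (hg : DependsOn g {k}ᶜ) (x x' : Ω k) (y : ∀ i, Ω (k.succAbove i)) :
    g (k.insertNth x y) = g (k.insertNth x' y) :=
  hg fun i hi => by
    obtain ⟨j, rfl⟩ := Fin.exists_succAbove_eq hi
    simp only [Fin.insertNth_apply_succAbove]

lemma dependsOn_compl_insertNth {α : Type*} {k : Fin (n + 1)} {j : Fin n} {g : (∀ i, Ω i) → α}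
    (hg : DependsOn g {k.succAbove j}ᶜ) (x : Ω k) :
    DependsOn (fun y : ∀ i, Ω (k.succAbove i) => g (k.insertNth x y)) {j}ᶜ := fun y y' hy =>
  hg fun i hi => by
    induction i using Fin.succAboveCases k with
    | x => simp only [Fin.insertNth_apply_same]
    | p i =>
      have hij : i ≠ j := fun h => hi (congrArg _ h)
      simpa only [Fin.insertNth_apply_succAbove] using hy i hij

end Fin

/-- The **Efron–Stein inequality**. -/
theorem variance_pi_le_sum_integral_sub_sq {n : ℕ} {Ω : Fin n → Type*}
    [∀ i, MeasurableSpace (Ω i)] {P : ∀ i, Measure (Ω i)} [∀ i, IsProbabilityMeasure (P i)]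
    {f : (∀ i, Ω i) → ℝ} (hf : MemLp f 2 (Measure.pi P)) {g : Fin n → (∀ i, Ω i) → ℝ}
    (hg : ∀ k, MemLp (g k) 2 (Measure.pi P)) (hgk : ∀ k, DependsOn (g k) {k}ᶜ) :
    Var[f; Measure.pi P] ≤ ∑ k, ∫ ω, (f ω - g k ω) ^ 2 ∂Measure.pi P := by
  induction n with
  | zero => simp [Measure.pi_of_empty P]
  | succ n ih =>
    have he := (measurePreserving_piFinSuccAbove P 0).symm
    have hF := hf.comp_measurePreserving he
    have hG (k) := (hg k).comp_measurePreserving he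
    obtain ⟨x₀, hx₀⟩ := (ae_memLp_two_prodMk (hG 0)).exists
    have h := variance_prod_le_add_sum hF hx₀ (fun k => hG (Fin.succAbove 0 k)) <| by
      filter_upwards [ae_memLp_two_prodMk hF, ae_all_iff.2 fun k => ae_memLp_two_prodMk (hG k)]
        with x hfx hgx
      exact ih hfx (fun k => hgx _) fun k => dependsOn_compl_insertNth (hgk _) x
    rw [Fin.sum_univ_succAbove _ 0, ← he.variance_fun_comp hf.1.aemeasurable]
    simp_rw [← he.integral_comp']
    refine h.trans_eq ?_
    congr with ⟨x, y⟩
    simp only [Function.comp_apply, piFinSuccAbove_symm_apply,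
      insertNth_congr_of_dependsOn_compl (hgk 0) x₀ x]

end EfronStein

section Counting

variable {X : Type*}

/-- The number of indices `i` with `(ω k, ω i) ∈ R`. -/
noncomputable def pairCount {n : ℕ} (R : Set (X × X)) (k : Fin n) (ω : Fin n → X) : ℝ :=
  ∑ i, R.indicator 1 (ω k, ω i)

lemma pairCount_nonneg {n : ℕ} (R : Set (X × X)) (k : Fin n) (ω : Fin n → X) :
    0 ≤ pairCount R k ω :=
  Finset.sum_nonneg fun _ _ => indicator_nonneg (fun _ _ => zero_le_one) _

lemma pairCount_le {n : ℕ} (R : Set (X × X)) (k : Fin n) (ω : Fin n → X) :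
    pairCount R k ω ≤ n := by
  calc pairCount R k ω ≤ ∑ _i : Fin n, (1 : ℝ) :=
        Finset.sum_le_sum fun _ _ => indicator_le_self' (fun _ _ => zero_le_one) _
    _ = n := by simp

lemma pairCount_insertNth_le {n : ℕ} (R : Set (X × X)) (k : Fin (n + 1)) (x : X)
    (y : Fin n → X) :
    pairCount R k (k.insertNth x y) ≤ 1 + ∑ i, (Prod.mk x ⁻¹' R).indicator 1 (y i) := by
  simp only [pairCount, Fin.sum_univ_succAbove _ k, Fin.insertNth_apply_same,
    Fin.insertNth_apply_succAbove]
  exact add_le_add (indicator_le_self' (fun _ _ => zero_le_one) _) le_rfl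

lemma pairCount_insertNth_eq_zero {n : ℕ} {R : Set (X × X)} {x : X} (hx : ∀ z ∈ R, z.1 ≠ x)
    (k : Fin (n + 1)) (y : Fin n → X) : pairCount R k (k.insertNth x y) = 0 :=
  Finset.sum_eq_zero fun i _ => indicator_of_notMem (fun h => hx _ h (by simp)) _

variable [MeasurableSpace X] {μ : Measure X} [IsProbabilityMeasure μ]

lemma integral_sq_sum_pi {ι : Type*} [Fintype ι] {f : X → ℝ} (hf : MemLp f 2 μ) :
    ∫ y, (∑ i : ι, f (y i)) ^ 2 ∂Measure.pi (fun _ : ι => μ) =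
      Fintype.card ι * Var[f; μ] + (Fintype.card ι * ∫ x, f x ∂μ) ^ 2 := by
  have hfi (i : ι) : MemLp (fun y : ι → X => f (y i)) 2 (Measure.pi fun _ => μ) :=
    hf.comp_measurePreserving (measurePreserving_eval _ i)
  have hvar := ProbabilityTheory.variance_eq_sub (memLp_finsetSum' Finset.univ fun i _ => hfi i)
  rw [ProbabilityTheory.variance_sum_pi fun _ => hf] at hvar
  simp only [Pi.pow_apply, Finset.sum_apply, Finset.sum_const, Finset.card_univ, nsmul_eq_mul,
    integral_finsetSum _ fun i _ => (hfi i).integrable one_le_two,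
    fun i => integral_comp_eval (μ := fun _ : ι => μ) (i := i) hf.1] at hvar
  linarith

lemma memLp_indicator_one {s : Set X} (hs : MeasurableSet s) (p : ℝ≥0∞) :
    MemLp (s.indicator (1 : X → ℝ)) p μ :=
  (memLp_const (1 : ℝ)).indicator hs

lemma memLp_two_sum_indicator_one {ι : Type*} [Fintype ι] {s : Set X} (hs : MeasurableSet s) :
    MemLp (fun y : ι → X => ∑ i, s.indicator (1 : X → ℝ) (y i)) 2 (Measure.pi fun _ => μ) :=
  memLp_finsetSum Finset.univ fun i _ =>
    (memLp_indicator_one hs 2).comp_measurePreserving (measurePreserving_eval (fun _ : ι => μ) i)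

lemma integral_one_add_sum_indicator_sq_le {ι : Type*} [Fintype ι] {s : Set X}
    (hs : MeasurableSet s) {q : ℝ} (hq : μ.real s ≤ q) :
    ∫ y, (1 + ∑ i : ι, s.indicator 1 (y i)) ^ 2 ∂Measure.pi (fun _ : ι => μ) ≤
      2 + 2 * (Fintype.card ι * q + (Fintype.card ι * q) ^ 2) := by
  have hsum := (memLp_two_sum_indicator_one (ι := ι) (μ := μ) hs).integrable_sq
  have hvar : Var[s.indicator (1 : X → ℝ); μ] ≤ μ.real s := by
    refine (ProbabilityTheory.variance_le_expectation_sq (memLp_indicator_one hs 2).1).trans_eq ?_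
    rw [← integral_indicator_one hs]
    congr with x
    by_cases hx : x ∈ s <;> simp [hx]
  calc ∫ y, (1 + ∑ i : ι, s.indicator 1 (y i)) ^ 2 ∂Measure.pi (fun _ : ι => μ)
      ≤ ∫ y, (2 + 2 * (∑ i : ι, s.indicator 1 (y i)) ^ 2) ∂Measure.pi (fun _ : ι => μ) := by
        refine integral_mono_of_nonneg (.of_forall fun y => sq_nonneg _)
          ((integrable_const _).add (hsum.const_mul _)) (.of_forall fun y => ?_)
        linarith [add_sq_le (a := 1) (b := ∑ i : ι, s.indicator (1 : X → ℝ) (y i))]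
    _ = 2 + 2 * (Fintype.card ι * Var[s.indicator 1; μ] + (Fintype.card ι * μ.real s) ^ 2) := by
        rw [integral_add (integrable_const _) (hsum.const_mul _), integral_const_mul,
          integral_sq_sum_pi (memLp_indicator_one hs 2), integral_indicator_one hs]
        simp
    _ ≤ 2 + 2 * (Fintype.card ι * q + (Fintype.card ι * q) ^ 2) := by
        gcongr
        exact hvar.trans hq

lemma measurable_pairCount {n : ℕ} {R : Set (X × X)} (hR : MeasurableSet R) (k : Fin n) :
    Measurable (pairCount R k) :=
  Finset.measurable_sum _ fun i _ => (measurable_one.indicator hR).comp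
    ((measurable_pi_apply k).prodMk (measurable_pi_apply i))

lemma integrable_pairCount_sq {n : ℕ} {R : Set (X × X)} (hR : MeasurableSet R) (k : Fin n) :
    Integrable (fun ω => pairCount R k ω ^ 2) (Measure.pi fun _ : Fin n => μ) :=
  MemLp.integrable_sq (.of_bound (measurable_pairCount hR k).aestronglyMeasurable n
    (.of_forall fun ω => by
      rw [Real.norm_of_nonneg (pairCount_nonneg R k ω)]
      exact pairCount_le R k ω))

lemma integral_pairCount_insertNth_sq_le {n : ℕ} {R : Set (X × X)} {x : X}
    (hR : MeasurableSet (Prod.mk x ⁻¹' R)) {q : ℝ} (hq : μ.real (Prod.mk x ⁻¹' R) ≤ q)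
    (k : Fin (n + 1)) :
    ∫ y, pairCount R k (k.insertNth x y) ^ 2 ∂Measure.pi (fun _ : Fin n => μ) ≤
      2 + 2 * (n * q + (n * q) ^ 2) := by
  have hsection := (memLp_const (1 : ℝ)).add (memLp_two_sum_indicator_one (ι := Fin n) (μ := μ) hR)
  calc ∫ y, pairCount R k (k.insertNth x y) ^ 2 ∂Measure.pi (fun _ : Fin n => μ)
      ≤ ∫ y, (1 + ∑ i, (Prod.mk x ⁻¹' R).indicator 1 (y i)) ^ 2 ∂Measure.pi (fun _ => μ) := by
        refine integral_mono_of_nonneg (.of_forall fun _ => sq_nonneg _) hsection.integrable_sq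
          (.of_forall fun y => ?_)
        exact pow_le_pow_left₀ (pairCount_nonneg R k _) (pairCount_insertNth_le R k x y) 2
    _ ≤ 2 + 2 * (n * q + (n * q) ^ 2) := by
        simpa using integral_one_add_sum_indicator_sq_le (ι := Fin n) hR hq

lemma integral_pairCount_sq_le {n : ℕ} {R : Set (X × X)} (hR : MeasurableSet R)
    {A : Set X} (hA : MeasurableSet A) (hRA : ∀ z ∈ R, z.1 ∈ A) {q : ℝ}
    (hq : ∀ x ∈ A, μ.real (Prod.mk x ⁻¹' R) ≤ q) (k : Fin n) :
    ∫ ω, pairCount R k ω ^ 2 ∂Measure.pi (fun _ : Fin n => μ) ≤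
      μ.real A * (2 + 2 * (n * q + (n * q) ^ 2)) := by
  obtain _ | n := n
  · exact k.elim0
  have he := (measurePreserving_piFinSuccAbove (fun _ : Fin (n + 1) => μ) k).symm
  have hint := (he.integrable_comp_emb (MeasurableEquiv.measurableEmbedding _)).2
    (integrable_pairCount_sq (μ := μ) hR k)
  simp only [Function.comp_def] at hint
  rw [← he.integral_comp', integral_prod _ hint, ← smul_eq_mul, ← integral_indicator_const _ hA]
  refine integral_mono hint.integral_prod_left ((integrable_const _).indicator hA) fun x => ?_
  simp only [piFinSuccAbove_symm_apply]
  by_cases hx : x ∈ A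
  · have hq0 : 0 ≤ q := measureReal_nonneg.trans (hq x hx)
    rw [indicator_of_mem hx]
    refine (integral_pairCount_insertNth_sq_le (measurable_prodMk_left hR) (hq x hx) k).trans ?_
    gcongr <;> exact n.le_succ
  · simp [indicator_of_notMem hx,
      fun y => pairCount_insertNth_eq_zero (fun z hz (h : z.1 = x) => hx (h ▸ hRA z hz)) k y]

end Counting

section Vertices

/-- The vertices of the convex hull of `s`. -/
def vertexSet {E : Type*} [AddCommGroup E] [Module ℝ E] (s : Set E) : Set E :=
  (convexHull ℝ s).extremePoints ℝ

/-- The number of vertices of the convex hull of `s`, as a real number; it is meant for finite `s`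
and is `0` when the hull has infinitely many vertices. -/
noncomputable def vertexNumber {E : Type*} [AddCommGroup E] [Module ℝ E] (s : Set E) : ℝ :=
  (vertexSet s).ncard

variable {E : Type*} [NormedAddCommGroup E]

lemma mem_vertexSet_iff_notMem_convexHull_sdiff [NormedSpace ℝ E] {s : Set E} (hs : s.Finite)
    {x : E} (hx : x ∈ s) : x ∈ vertexSet s ↔ x ∉ convexHull ℝ (s \ {x}) := by
  refine ⟨fun h hmem => ?_, fun h => ?_⟩
  · have hsub : s \ {x} ⊆ convexHull ℝ s \ {x} := sdiff_subset_sdiff_left (subset_convexHull ℝ s)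
    exact ((convex_convexHull ℝ s).mem_extremePoints_iff_mem_sdiff_convexHull_sdiff.1 h).2
      (convexHull_mono hsub hmem)
  · by_contra hext
    have hsub : vertexSet s ⊆ s \ {x} := fun y hy =>
      ⟨extremePoints_convexHull_subset hy, fun hyx => hext (hyx ▸ hy)⟩
    have hclosed : IsClosed (convexHull ℝ (s \ {x})) :=
      (hs.sdiff.isCompact_convexHull ℝ).isClosed
    have hkrein : convexHull ℝ s ⊆ convexHull ℝ (s \ {x}) := by
      rw [← closure_convexHull_extremePoints (hs.isCompact_convexHull ℝ) (convex_convexHull ℝ s)]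
      exact closure_minimal (convexHull_mono hsub) hclosed
    exact h (hkrein (subset_convexHull ℝ s hx))

variable [InnerProductSpace ℝ E]

lemma notMem_convexHull_iff_exists_inner_lt [CompleteSpace E] [Nontrivial E] {t : Set E}
    (ht : t.Finite) {x : E} :
    x ∉ convexHull ℝ t ↔ ∃ u : E, ‖u‖ = 1 ∧ ∀ y ∈ t, ⟪u, y⟫ < ⟪u, x⟫ := by
  constructor
  · intro hx
    obtain rfl | ⟨y₀, hy₀⟩ := t.eq_empty_or_nonempty
    · obtain ⟨u, hu⟩ := exists_norm_eq E zero_le_one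
      exact ⟨u, hu, by simp⟩
    obtain ⟨f, c, hfc, hcx⟩ := geometric_hahn_banach_closed_point (convex_convexHull ℝ t)
      (ht.isCompact_convexHull ℝ).isClosed hx
    set w := (InnerProductSpace.toDual ℝ E).symm f
    have hw (y) (hy : y ∈ t) : ⟪w, y⟫ < ⟪w, x⟫ := by
      simpa only [w, InnerProductSpace.toDual_symm_apply] using
        (hfc y (subset_convexHull ℝ t hy)).trans hcx
    have hw0 : w ≠ 0 := fun h => by simpa [h] using hw y₀ hy₀
    refine ⟨‖w‖⁻¹ • w, norm_smul_inv_norm hw0, fun y hy => ?_⟩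
    simp only [real_inner_smul_left]
    exact mul_lt_mul_of_pos_left (hw y hy) (inv_pos.2 (norm_pos_iff.2 hw0))
  · rintro ⟨u, -, hu⟩ hx
    have hconv : Convex ℝ {y : E | ⟪u, y⟫ < ⟪u, x⟫} := convex_halfSpace_lt (innerₛₗ ℝ u).isLinear _
    exact lt_irrefl ⟪u, x⟫ (convexHull_min hu hconv hx)

lemma norm_sub_sq_le_of_le_inner {u x y : E} {h : ℝ} (hu : ‖u‖ ≤ 1) (hx : ‖x‖ ≤ 1) (hy : ‖y‖ ≤ 1)
    (hux : 1 - h ≤ ⟪u, x⟫) (huy : 1 - h ≤ ⟪u, y⟫) : ‖x - y‖ ^ 2 ≤ 8 * h := by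
  have hadd : 2 * (1 - h) ≤ ‖x + y‖ := by
    calc 2 * (1 - h) ≤ ⟪u, x + y⟫ := by rw [inner_add_right]; linarith
      _ ≤ ‖u‖ * ‖x + y‖ := real_inner_le_norm u _
      _ ≤ ‖x + y‖ := mul_le_of_le_one_left (norm_nonneg _) hu
  have hpar : ‖x + y‖ ^ 2 + ‖x - y‖ ^ 2 = 2 * (‖x‖ ^ 2 + ‖y‖ ^ 2) := by
    simpa only [sq] using parallelogram_law_with_norm ℝ x y
  have hx2 : ‖x‖ ^ 2 ≤ 1 := pow_le_one₀ (norm_nonneg x) hx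
  have hy2 : ‖y‖ ^ 2 ≤ 1 := pow_le_one₀ (norm_nonneg y) hy
  rcases le_total h 1 with h1 | h1
  · have hsq : (2 * (1 - h)) ^ 2 ≤ ‖x + y‖ ^ 2 := pow_le_pow_left₀ (by linarith) hadd 2
    linarith [sq_nonneg h]
  · linarith [sq_nonneg ‖x + y‖]

/-- Every cap `{x | 1 - h ≤ ⟪u, x⟫}` of height `h` of the unit ball contains a point of `t`. -/
def MeetsEveryCap (h : ℝ) (t : Set E) : Prop :=
  ∀ u : E, ‖u‖ = 1 → ∃ y ∈ t, 1 - h ≤ ⟪u, y⟫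

variable (E) in
/-- The part of the unit ball within distance `h` of the unit sphere. -/
def outerAnnulus (h : ℝ) : Set E := {x | 1 - h ≤ ‖x‖ ∧ ‖x‖ ≤ 1}

variable (E) in
/-- The pairs of points of the outer annulus of width `h` at distance at most `√(8h)`, the diameter
bound for caps of height `h`. -/
def closePairs (h : ℝ) : Set (E × E) :=
  {z | z.1 ∈ outerAnnulus E h ∧ z.2 ∈ outerAnnulus E h ∧ ‖z.1 - z.2‖ ^ 2 ≤ 8 * h}

lemma mem_closePairs_of_le_inner {u x y : E} {h : ℝ} (hu : ‖u‖ = 1) (hx : ‖x‖ ≤ 1) (hy : ‖y‖ ≤ 1)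
    (hux : 1 - h ≤ ⟪u, x⟫) (huy : 1 - h ≤ ⟪u, y⟫) : (x, y) ∈ closePairs E h := by
  have hle (z : E) : ⟪u, z⟫ ≤ ‖z‖ := by simpa [hu] using real_inner_le_norm u z
  exact ⟨⟨hux.trans (hle x), hx⟩, ⟨huy.trans (hle y), hy⟩,
    norm_sub_sq_le_of_le_inner hu.le hx hy hux huy⟩

section Insert

variable [CompleteSpace E] [Nontrivial E] {h : ℝ} {p : E} {t : Set E}

lemma mem_closePairs_self_of_notMem_convexHull (ht : t.Finite) (hcap : MeetsEveryCap h t)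
    (hp : ‖p‖ ≤ 1) (hpt : p ∉ convexHull ℝ t) : (p, p) ∈ closePairs E h := by
  obtain ⟨u, hu, hlt⟩ := (notMem_convexHull_iff_exists_inner_lt ht).1 hpt
  obtain ⟨y, hy, huy⟩ := hcap u hu
  have hup : 1 - h ≤ ⟪u, p⟫ := huy.trans (hlt y hy).le
  exact mem_closePairs_of_le_inner hu hp hp hup hup

lemma mem_closePairs_of_mem_vertexSet_sdiff_insert (ht : t.Finite) (hcap : MeetsEveryCap h t)
    (hball : ∀ y ∈ insert p t, ‖y‖ ≤ 1) {x : E}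
    (hx : x ∈ vertexSet t \ vertexSet (insert p t)) : (p, x) ∈ closePairs E h := by
  obtain ⟨hxt, hxpt⟩ := hx
  have hxmem : x ∈ t := extremePoints_convexHull_subset hxt
  obtain ⟨u, hu, hlt⟩ := (notMem_convexHull_iff_exists_inner_lt ht.sdiff).1
    ((mem_vertexSet_iff_notMem_convexHull_sdiff ht hxmem).1 hxt)
  have hpx : ⟪u, x⟫ ≤ ⟪u, p⟫ := by
    by_contra! hpx
    refine hxpt ((mem_vertexSet_iff_notMem_convexHull_sdiff (ht.insert p)
      (mem_insert_of_mem p hxmem)).2 ?_)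
    refine (notMem_convexHull_iff_exists_inner_lt (ht.insert p).sdiff).2 ⟨u, hu, ?_⟩
    rintro y ⟨rfl | hy, hyx⟩
    exacts [hpx, hlt y ⟨hy, hyx⟩]
  obtain ⟨y, hy, huy⟩ := hcap u hu
  have hux : 1 - h ≤ ⟪u, x⟫ := by
    obtain rfl | hyx := eq_or_ne y x
    exacts [huy, huy.trans (hlt y ⟨hy, hyx⟩).le]
  exact mem_closePairs_of_le_inner hu (hball p (mem_insert p t))
    (hball x (mem_insert_of_mem p hxmem)) (hux.trans hpx) hux

lemma mem_closePairs_of_mem_vertexSet_insert_sdiff (ht : t.Finite) (hcap : MeetsEveryCap h t)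
    (hp : ‖p‖ ≤ 1) {x : E} (hx : x ∈ vertexSet (insert p t) \ vertexSet t) :
    (p, x) ∈ closePairs E h := by
  have hxt : x ∉ convexHull ℝ t := fun hmem =>
    hx.2 (inter_extremePoints_subset_extremePoints_of_subset
      (convexHull_mono (subset_insert p t)) ⟨hmem, hx.1⟩)
  obtain rfl | hmem := extremePoints_convexHull_subset hx.1
  · exact mem_closePairs_self_of_notMem_convexHull ht hcap hp hxt
  · exact absurd (subset_convexHull ℝ t hmem) hxt

end Insert

lemma finite_vertexSet {s : Set E} (hs : s.Finite) : (vertexSet s).Finite :=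
  hs.subset extremePoints_convexHull_subset

lemma abs_ncard_sub_ncard_le {α : Type*} {A B C : Set α} (hA : A.Finite) (hB : B.Finite)
    (hC : C.Finite) (hAB : A \ B ⊆ C) (hBA : B \ A ⊆ C) :
    |(A.ncard : ℝ) - B.ncard| ≤ C.ncard := by
  have hle {S T : Set α} (hT : T.Finite) (hST : S \ T ⊆ C) : (S.ncard : ℝ) ≤ C.ncard + T.ncard := by
    have hsub : S ⊆ C ∪ T := fun x hx => or_iff_not_imp_right.2 fun hxT => hST ⟨hx, hxT⟩
    exact_mod_cast (ncard_le_ncard hsub (hC.union hT)).trans (ncard_union_le C T)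
  rw [abs_sub_le_iff]
  constructor <;> linarith [hle hB hAB, hle hA hBA]

lemma insert_image_compl_singleton {ι α : Type*} (f : ι → α) (k : ι) :
    insert (f k) (f '' {k}ᶜ) = range f := by
  rw [← image_insert_eq, insert_eq, union_compl_self, image_univ]

lemma ncard_setOf_mem_range_le_pairCount {X : Type*} {n : ℕ} (R : Set (X × X)) (k : Fin n)
    (ω : Fin n → X) :
    ({x ∈ range ω | (ω k, x) ∈ R}.ncard : ℝ) ≤ pairCount R k ω := by
  classical
  have himage : {x ∈ range ω | (ω k, x) ∈ R} =
      ((Finset.univ.filter fun i => (ω k, ω i) ∈ R).image ω : Finset X) := by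
    ext x
    simp only [mem_range, Finset.coe_image, mem_image, Finset.coe_filter,
      Finset.mem_univ, true_and, mem_ofPred_eq]
    constructor
    · rintro ⟨⟨i, rfl⟩, hi⟩
      exact ⟨i, hi, rfl⟩
    · rintro ⟨i, hi, rfl⟩
      exact ⟨⟨i, rfl⟩, hi⟩
  rw [himage, ncard_coe_finset, pairCount]
  refine (Nat.cast_le.2 Finset.card_image_le).trans_eq ?_
  simp [indicator_apply]

theorem abs_vertexNumber_sub_le_pairCount [CompleteSpace E] [Nontrivial E] {n : ℕ} {h : ℝ}
    {ω : Fin n → E} (hω : ∀ i, ‖ω i‖ ≤ 1) {k : Fin n} (hcap : MeetsEveryCap h (ω '' {k}ᶜ)) :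
    |vertexNumber (range ω) - vertexNumber (ω '' {k}ᶜ)| ≤ pairCount (closePairs E h) k ω := by
  have ht : (ω '' {k}ᶜ).Finite := toFinite _
  refine (abs_ncard_sub_ncard_le (finite_vertexSet (finite_range ω)) (finite_vertexSet ht)
    ((finite_range ω).sep _) ?_ ?_).trans (ncard_setOf_mem_range_le_pairCount _ k ω)
  · refine fun x hx => ⟨extremePoints_convexHull_subset hx.1, ?_⟩
    rw [← insert_image_compl_singleton ω k] at hx
    exact mem_closePairs_of_mem_vertexSet_insert_sdiff ht hcap (hω k) hx
  · refine fun x hx => ⟨image_subset_range _ _ (extremePoints_convexHull_subset hx.1), ?_⟩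
    rw [← insert_image_compl_singleton ω k] at hx
    refine mem_closePairs_of_mem_vertexSet_sdiff_insert ht hcap ?_ hx
    rw [insert_image_compl_singleton]
    exact forall_mem_range.2 hω

end Vertices

section Measurability

lemma vertexNumber_nonneg {E : Type*} [AddCommGroup E] [Module ℝ E] (s : Set E) :
    0 ≤ vertexNumber s :=
  Nat.cast_nonneg _

lemma vertexNumber_image_le {E ι : Type*} [AddCommGroup E] [Module ℝ E] [Fintype ι] (T : Set ι)
    (ω : ι → E) : vertexNumber (ω '' T) ≤ Fintype.card ι := by
  refine Nat.cast_le.2 ?_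
  calc (vertexSet (ω '' T)).ncard ≤ (ω '' T).ncard :=
        ncard_le_ncard extremePoints_convexHull_subset (toFinite _)
    _ ≤ T.ncard := ncard_image_le (toFinite T)
    _ ≤ Fintype.card ι := by
        simpa only [ncard_univ, Nat.card_eq_fintype_card] using
          ncard_le_ncard (subset_univ T) (toFinite _)

lemma vertexNumber_range_le {E ι : Type*} [AddCommGroup E] [Module ℝ E] [Fintype ι]
    (ω : ι → E) : vertexNumber (range ω) ≤ Fintype.card ι := by
  simpa only [image_univ] using vertexNumber_image_le univ ω

variable {E : Type*} [NormedAddCommGroup E] {ι : Type*} [Finite ι]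

lemma apply_mem_vertexSet_range_iff [NormedSpace ℝ E] {ω : ι → E} {i : ι} :
    ω i ∈ vertexSet (range ω) ↔
      ∃ J : Set ι, (∀ j ∈ J, ω j = ω i) ∧ ω i ∉ convexHull ℝ (ω '' Jᶜ) := by
  rw [mem_vertexSet_iff_notMem_convexHull_sdiff (finite_range ω) (mem_range_self i)]
  constructor
  · refine fun hi => ⟨{j | ω j = ω i}, fun j hj => hj, fun hmem => hi (convexHull_mono ?_ hmem)⟩
    rintro _ ⟨j, hj, rfl⟩
    exact ⟨mem_range_self j, hj⟩
  · rintro ⟨J, hJ, hi⟩ hmem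
    refine hi (convexHull_mono ?_ hmem)
    rintro _ ⟨⟨j, rfl⟩, hj⟩
    exact ⟨j, fun hjJ => hj (hJ j hjJ), rfl⟩

/-- Each vertex is counted at the first index at which it is attained. -/
lemma vertexNumber_range_eq_ncard [NormedSpace ℝ E] [LinearOrder ι] (ω : ι → E) :
    vertexNumber (range ω) =
      {i | ω i ∈ vertexSet (range ω) ∧ ∀ j < i, ω j ≠ ω i}.ncard := by
  set I := {i | ω i ∈ vertexSet (range ω) ∧ ∀ j < i, ω j ≠ ω i}
  have hinj : InjOn ω I := fun i hi j hj hij => by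
    rcases lt_trichotomy i j with h | h | h
    exacts [absurd hij (hj.2 i h), h, absurd hij.symm (hi.2 j h)]
  have himage : ω '' I = vertexSet (range ω) := by
    refine Subset.antisymm (image_subset_iff.2 fun i hi => hi.1) fun x hx => ?_
    have hne : (ω ⁻¹' {x}).Nonempty := by
      obtain ⟨i, rfl⟩ := extremePoints_convexHull_subset hx
      exact ⟨i, rfl⟩
    obtain ⟨i, hi⟩ := (toFinite (ω ⁻¹' {x})).exists_minimal hne
    obtain rfl : ω i = x := hi.prop
    exact ⟨i, ⟨hx, fun j hj hij => (hi.le_of_le hij hj.le).not_gt hj⟩, rfl⟩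
  rw [vertexNumber, ← himage, hinj.ncard_image]

lemma measurable_ncard_setOf {Ω : Type*} [MeasurableSpace Ω] {p : ι → Ω → Prop}
    (hp : ∀ i, MeasurableSet {ω | p i ω}) : Measurable fun ω => {i | p i ω}.ncard := by
  classical
  have := Fintype.ofFinite ι
  have hsum : (fun ω => {i | p i ω}.ncard) = fun ω => ∑ i, {ω | p i ω}.indicator 1 ω := by
    ext ω
    simp [indicator_apply, ncard_eq_toFinset_card']
  rw [hsum]
  exact Finset.measurable_sum _ fun i _ => measurable_one.indicator (hp i)

variable [InnerProductSpace ℝ E] [CompleteSpace E] [Nontrivial E]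

lemma isOpen_setOf_notMem_convexHull_image (i : ι) (T : Set ι) :
    IsOpen {ω : ι → E | ω i ∉ convexHull ℝ (ω '' T)} := by
  simp only [notMem_convexHull_iff_exists_inner_lt (toFinite _), forall_mem_image, ofPred_exists,
    ofPred_and, ofPred_forall]
  refine isOpen_iUnion fun u => isOpen_const.inter ((toFinite T).isOpen_biInter fun j _ => ?_)
  exact isOpen_lt (by fun_prop) (by fun_prop)

variable [MeasurableSpace E] [BorelSpace E] [SecondCountableTopology E]

lemma measurableSet_setOf_mem_vertexSet_range (i : ι) :
    MeasurableSet {ω : ι → E | ω i ∈ vertexSet (range ω)} := by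
  have hsets : {ω : ι → E | ω i ∈ vertexSet (range ω)} =
      ⋃ J : Set ι, (⋂ j ∈ J, {ω | ω j = ω i}) ∩ {ω | ω i ∉ convexHull ℝ (ω '' Jᶜ)} := by
    ext ω
    simp only [apply_mem_vertexSet_range_iff, mem_ofPred_eq, mem_iUnion, mem_inter_iff, mem_iInter]
  rw [hsets]
  refine .iUnion fun J => .inter (.biInter J.to_countable fun j _ => ?_)
    (isOpen_setOf_notMem_convexHull_image i Jᶜ).measurableSet
  exact measurableSet_eq_fun (measurable_pi_apply j) (measurable_pi_apply i)

lemma measurable_vertexNumber_range [LinearOrder ι] :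
    Measurable fun ω : ι → E => vertexNumber (range ω) := by
  simp only [vertexNumber_range_eq_ncard]
  refine measurable_from_nat.comp (measurable_ncard_setOf fun i => ?_)
  simp only [ofPred_and, ofPred_forall]
  refine (measurableSet_setOf_mem_vertexSet_range i).inter
    (.iInter fun j => .iInter fun _ => MeasurableSet.compl ?_)
  exact measurableSet_eq_fun (measurable_pi_apply j) (measurable_pi_apply i)

lemma measurable_vertexNumber_image [LinearOrder ι] (T : Set ι) :
    Measurable fun ω : ι → E => vertexNumber (ω '' T) := by
  simp only [← range_domRestrict]
  exact measurable_vertexNumber_range.comp (measurable_pi_lambda _ fun j => measurable_pi_apply _)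

end Measurability

section Caps

lemma measureReal_pi_forall_ne_mem {X ι : Type*} [MeasurableSpace X] [Fintype ι] {μ : Measure X}
    [IsProbabilityMeasure μ] (k : ι) (Q : Set X) :
    (Measure.pi fun _ : ι => μ).real {ω | ∀ j ≠ k, ω j ∈ Q} =
      μ.real Q ^ (Fintype.card ι - 1) := by
  classical
  have hpi : {ω : ι → X | ∀ j ≠ k, ω j ∈ Q} = Set.pi ↑(Finset.univ.erase k) fun _ => Q := by
    ext ω
    simp [Set.mem_pi]
  rw [hpi, measureReal_def, Measure.pi_pi_finset, ENNReal.toReal_prod, Finset.prod_const,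
    Finset.card_erase_of_mem (Finset.mem_univ k), Finset.card_univ, measureReal_def]

variable {E : Type*} [NormedAddCommGroup E] [InnerProductSpace ℝ E] {h : ℝ} {V : Finset E}

lemma meetsEveryCap_of_forall_mem_net {t : Set E} (ht : ∀ x ∈ t, ‖x‖ ≤ 1)
    (hV : ∀ u : E, ‖u‖ = 1 → ∃ v ∈ V, ‖u - v‖ ≤ h / 2)
    (hVt : ∀ v ∈ V, ∃ y ∈ t, 1 - h / 2 ≤ ⟪v, y⟫) : MeetsEveryCap h t := by
  intro u hu
  obtain ⟨v, hv, huv⟩ := hV u hu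
  obtain ⟨y, hy, hvy⟩ := hVt v hv
  refine ⟨y, hy, ?_⟩
  have hdiff : |⟪u - v, y⟫| ≤ h / 2 :=
    (abs_real_inner_le_norm _ _).trans <|
      (mul_le_of_le_one_right (norm_nonneg _) (ht y hy)).trans huv
  rw [inner_sub_left] at hdiff
  linarith [neg_le_of_abs_le hdiff]

variable {ι : Type*} [MeasurableSpace E] [BorelSpace E]

lemma measurableSet_setOf_not_meetsEveryCap [SecondCountableTopology E] [Finite ι] (h : ℝ)
    (T : Set ι) : MeasurableSet {ω : ι → E | ¬ MeetsEveryCap h (ω '' T)} := by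
  refine IsOpen.measurableSet ?_
  simp only [MeetsEveryCap, not_forall, not_exists, not_and, not_le, forall_mem_image,
    ofPred_exists, ofPred_forall]
  refine isOpen_iUnion fun u => isOpen_iUnion fun _ => ?_
  exact (toFinite T).isOpen_biInter fun j _ => isOpen_lt (by fun_prop) (by fun_prop)

variable [Fintype ι] {μ : Measure E} [IsProbabilityMeasure μ] {p : ℝ}

lemma measureReal_pi_not_meetsEveryCap_le (hμ : ∀ᵐ x ∂μ, ‖x‖ ≤ 1)
    (hV : ∀ u : E, ‖u‖ = 1 → ∃ v ∈ V, ‖u - v‖ ≤ h / 2)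
    (hp : ∀ v ∈ V, p ≤ μ.real {x | 1 - h / 2 ≤ ⟪v, x⟫}) (k : ι) :
    (Measure.pi fun _ : ι => μ).real {ω | ¬ MeetsEveryCap h (ω '' {k}ᶜ)} ≤
      V.card * (1 - p) ^ (Fintype.card ι - 1) := by
  let missed (v : E) : Set (ι → E) := {ω | ∀ j ≠ k, ω j ∈ {x | 1 - h / 2 ≤ ⟪v, x⟫}ᶜ}
  have hball : ∀ᵐ ω ∂Measure.pi fun _ : ι => μ, ∀ i, ‖ω i‖ ≤ 1 :=
    Measure.ae_pi_le_pi (Filter.eventually_pi fun _ => hμ)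
  have hsub : {ω | ¬ MeetsEveryCap h (ω '' {k}ᶜ)} ≤ᵐ[Measure.pi fun _ : ι => μ]
      ⋃ v ∈ V, missed v := by
    filter_upwards [hball] with ω hω hcap
    by_contra hmem
    refine hcap (meetsEveryCap_of_forall_mem_net (forall_mem_image.2 fun j _ => hω j) hV ?_)
    intro v hv
    by_contra! hvω
    exact hmem (mem_iUnion₂.2 ⟨v, hv, fun j hj => (hvω _ ⟨j, hj, rfl⟩).not_ge⟩)
  have hmissed (v) (hv : v ∈ V) : (Measure.pi fun _ : ι => μ).real (missed v) ≤
      (1 - p) ^ (Fintype.card ι - 1) := by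
    have hcap : MeasurableSet {x : E | 1 - h / 2 ≤ ⟪v, x⟫} :=
      measurableSet_le measurable_const (by fun_prop)
    rw [measureReal_pi_forall_ne_mem, probReal_compl_eq_one_sub hcap]
    exact pow_le_pow_left₀ (sub_nonneg.2 measureReal_le_one) (by linarith [hp v hv]) _
  calc _ ≤ (Measure.pi fun _ : ι => μ).real (⋃ v ∈ V, missed v) :=
        ENNReal.toReal_mono (measure_ne_top _ _) (measure_mono_ae hsub)
    _ ≤ ∑ v ∈ V, (Measure.pi fun _ : ι => μ).real (missed v) := measureReal_biUnion_finset_le V _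
    _ ≤ V.card * (1 - p) ^ (Fintype.card ι - 1) := by
        simpa only [nsmul_eq_mul] using Finset.sum_le_card_nsmul V _ _ hmissed

end Caps

section VarianceBound

lemma sq_vertexNumber_sub_le {E : Type*} [NormedAddCommGroup E] [InnerProductSpace ℝ E]
    [CompleteSpace E] [Nontrivial E] {n : ℕ} {ω : Fin n → E} (hω : ∀ i, ‖ω i‖ ≤ 1) (h : ℝ)
    (k : Fin n) :
    (vertexNumber (range ω) - vertexNumber (ω '' {k}ᶜ)) ^ 2 ≤ pairCount (closePairs E h) k ω ^ 2 +
      {ω : Fin n → E | ¬ MeetsEveryCap h (ω '' {k}ᶜ)}.indicator (fun _ => (n : ℝ) ^ 2) ω := by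
  by_cases hcap : MeetsEveryCap h (ω '' {k}ᶜ)
  · rw [indicator_of_notMem (not_not.2 hcap), add_zero, ← sq_abs]
    exact pow_le_pow_left₀ (abs_nonneg _) (abs_vertexNumber_sub_le_pairCount hω hcap) 2
  · rw [indicator_of_mem hcap]
    have hrange := vertexNumber_range_le ω
    have himage := vertexNumber_image_le {k}ᶜ ω
    rw [Fintype.card_fin] at hrange himage
    have habs := abs_sub_le_of_nonneg_of_le (vertexNumber_nonneg _) hrange
      (vertexNumber_nonneg _) himage
    rw [← sq_abs]
    exact (pow_le_pow_left₀ (abs_nonneg _) habs 2).trans (le_add_of_nonneg_left (sq_nonneg _))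

lemma measurableSet_outerAnnulus {E : Type*} [NormedAddCommGroup E] [MeasurableSpace E]
    [OpensMeasurableSpace E] (h : ℝ) : MeasurableSet (outerAnnulus E h) :=
  (measurableSet_le measurable_const measurable_norm).inter
    (measurableSet_le measurable_norm measurable_const)

variable {E : Type*} [NormedAddCommGroup E] [MeasurableSpace E] [BorelSpace E]
  [SecondCountableTopology E]

lemma measurableSet_closePairs (h : ℝ) : MeasurableSet (closePairs E h) := by
  refine .inter (measurable_fst (measurableSet_outerAnnulus h))
    (.inter (measurable_snd (measurableSet_outerAnnulus h)) ?_)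
  exact measurableSet_le ((measurable_fst.sub measurable_snd).norm.pow_const 2) measurable_const

variable [InnerProductSpace ℝ E] [CompleteSpace E] [Nontrivial E] {μ : Measure E}
  [IsProbabilityMeasure μ] {n : ℕ}

lemma memLp_two_vertexNumber_range :
    MemLp (fun ω : Fin n → E => vertexNumber (range ω)) 2 (Measure.pi fun _ => μ) := by
  refine .of_bound measurable_vertexNumber_range.aestronglyMeasurable n (.of_forall fun ω => ?_)
  rw [Real.norm_of_nonneg (vertexNumber_nonneg _)]
  simpa using vertexNumber_range_le ω

lemma memLp_two_vertexNumber_image (T : Set (Fin n)) :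
    MemLp (fun ω : Fin n → E => vertexNumber (ω '' T)) 2 (Measure.pi fun _ => μ) := by
  refine .of_bound (measurable_vertexNumber_image T).aestronglyMeasurable n
    (.of_forall fun ω => ?_)
  rw [Real.norm_of_nonneg (vertexNumber_nonneg _)]
  simpa using vertexNumber_image_le T ω

variable {h p q : ℝ} {V : Finset E}

lemma integral_sq_vertexNumber_sub_le (hμ : ∀ᵐ x ∂μ, ‖x‖ ≤ 1)
    (hq : ∀ x ∈ outerAnnulus E h, μ.real (Prod.mk x ⁻¹' closePairs E h) ≤ q)
    (hV : ∀ u : E, ‖u‖ = 1 → ∃ v ∈ V, ‖u - v‖ ≤ h / 2)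
    (hp : ∀ v ∈ V, p ≤ μ.real {x | 1 - h / 2 ≤ ⟪v, x⟫}) (k : Fin n) :
    ∫ ω, (vertexNumber (range ω) - vertexNumber (ω '' {k}ᶜ)) ^ 2
        ∂Measure.pi (fun _ : Fin n => μ) ≤
      μ.real (outerAnnulus E h) * (2 + 2 * (n * q + (n * q) ^ 2)) +
        V.card * (1 - p) ^ (n - 1) * n ^ 2 := by
  have hball : ∀ᵐ ω ∂Measure.pi fun _ : Fin n => μ, ∀ i, ‖ω i‖ ≤ 1 :=
    Measure.ae_pi_le_pi (Filter.eventually_pi fun _ => hμ)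
  have hbad : MeasurableSet {ω : Fin n → E | ¬ MeetsEveryCap h (ω '' {k}ᶜ)} :=
    measurableSet_setOf_not_meetsEveryCap h _
  have hpair := integrable_pairCount_sq (μ := μ) (measurableSet_closePairs (E := E) h) k
  have hind : Integrable ({ω : Fin n → E | ¬ MeetsEveryCap h (ω '' {k}ᶜ)}.indicator
      fun _ => (n : ℝ) ^ 2) (Measure.pi fun _ : Fin n => μ) := (integrable_const _).indicator hbad
  calc _ ≤ ∫ ω, (pairCount (closePairs E h) k ω ^ 2 +
          {ω : Fin n → E | ¬ MeetsEveryCap h (ω '' {k}ᶜ)}.indicator (fun _ => (n : ℝ) ^ 2) ω)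
            ∂Measure.pi (fun _ : Fin n => μ) := by
        refine integral_mono_of_nonneg (.of_forall fun _ => sq_nonneg _) (hpair.add hind) ?_
        filter_upwards [hball] with ω hω using sq_vertexNumber_sub_le hω h k
    _ ≤ _ := by
        rw [integral_add hpair hind, integral_indicator_const _ hbad, smul_eq_mul]
        refine add_le_add (integral_pairCount_sq_le (measurableSet_closePairs h)
          (measurableSet_outerAnnulus h) (fun z hz => hz.1) hq k) ?_
        gcongr
        simpa using measureReal_pi_not_meetsEveryCap_le hμ hV hp k

theorem variance_vertexNumber_le (hμ : ∀ᵐ x ∂μ, ‖x‖ ≤ 1)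
    (hq : ∀ x ∈ outerAnnulus E h, μ.real (Prod.mk x ⁻¹' closePairs E h) ≤ q)
    (hV : ∀ u : E, ‖u‖ = 1 → ∃ v ∈ V, ‖u - v‖ ≤ h / 2)
    (hp : ∀ v ∈ V, p ≤ μ.real {x | 1 - h / 2 ≤ ⟪v, x⟫}) :
    Var[fun ω : Fin n → E => vertexNumber (range ω); Measure.pi fun _ => μ] ≤
      n * (μ.real (outerAnnulus E h) * (2 + 2 * (n * q + (n * q) ^ 2)) +
        V.card * (1 - p) ^ (n - 1) * n ^ 2) := by
  have hdep (k : Fin n) : DependsOn (fun ω : Fin n → E => vertexNumber (ω '' {k}ᶜ)) {k}ᶜ :=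
    fun ω ω' hωω' => congrArg vertexNumber (image_congr hωω')
  refine (variance_pi_le_sum_integral_sub_sq memLp_two_vertexNumber_range
    (fun k => memLp_two_vertexNumber_image _) hdep).trans ?_
  simpa only [Finset.card_univ, Fintype.card_fin, nsmul_eq_mul] using
    Finset.sum_le_card_nsmul Finset.univ _ _ fun k _ =>
      integral_sq_vertexNumber_sub_le hμ hq hV hp k

end VarianceBound

section CircleNet

lemma norm_exp_ofReal_mul_I_sub_le (x y : ℝ) :
    ‖Complex.exp (x * Complex.I) - Complex.exp (y * Complex.I)‖ ≤ |x - y| := by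
  have hfactor : Complex.exp (x * Complex.I) - Complex.exp (y * Complex.I) =
      Complex.exp (y * Complex.I) * (Complex.exp (Complex.I * (x - y : ℝ)) - 1) := by
    rw [mul_sub, ← Complex.exp_add, mul_one]
    congr 2
    push_cast
    ring
  rw [hfactor, norm_mul, Complex.norm_exp_ofReal_mul_I, one_mul]
  exact Real.norm_exp_I_mul_ofReal_sub_one_le

lemma exists_net_complex_unit_circle {ε : ℝ} (hε : 0 < ε) (hε1 : ε ≤ 1) :
    ∃ V : Finset ℂ, (V.card : ℝ) ≤ 8 / ε ∧ (∀ v ∈ V, ‖v‖ = 1) ∧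
      ∀ z : ℂ, ‖z‖ = 1 → ∃ v ∈ V, ‖z - v‖ ≤ ε := by
  let angle (j : ℕ) : ℝ := -Real.pi + j * ε
  refine ⟨(Finset.range (⌊2 * Real.pi / ε⌋₊ + 1)).image fun j => Complex.exp (angle j * Complex.I),
    ?_, ?_, fun z hz => ?_⟩
  · calc (_ : ℝ) ≤ (⌊2 * Real.pi / ε⌋₊ + 1 : ℕ) :=
          Nat.cast_le.2 (Finset.card_image_le.trans_eq (Finset.card_range _))
      _ ≤ 2 * Real.pi / ε + 1 := by
          push_cast
          gcongr
          exact Nat.floor_le (by positivity)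
      _ ≤ 8 / ε := by
          rw [div_add_one hε.ne']
          gcongr
          linarith [Real.pi_lt_d2]
  · simp [Complex.norm_exp_ofReal_mul_I]
  · have hθ : 0 ≤ Complex.arg z + Real.pi := by linarith [Complex.neg_pi_lt_arg z]
    set j := ⌊(Complex.arg z + Real.pi) / ε⌋₊
    have hj : j ≤ ⌊2 * Real.pi / ε⌋₊ :=
      Nat.floor_mono (by gcongr; linarith [Complex.arg_le_pi z])
    have hj_le : j * ε ≤ Complex.arg z + Real.pi :=
      (le_div_iff₀ hε).1 (Nat.floor_le (by positivity))
    have hlt_j : Complex.arg z + Real.pi < (j + 1) * ε :=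
      (div_lt_iff₀ hε).1 (Nat.lt_floor_add_one _)
    have hz_exp : z = Complex.exp (Complex.arg z * Complex.I) := by
      simpa [hz] using (Complex.norm_mul_exp_arg_mul_I z).symm
    refine ⟨_, Finset.mem_image_of_mem _ (Finset.mem_range_succ_iff.2 hj), ?_⟩
    nth_rw 1 [hz_exp]
    refine (norm_exp_ofReal_mul_I_sub_le _ _).trans (abs_le.2 ⟨?_, ?_⟩) <;> simp only [angle] <;>
      linarith

lemma exists_net_unit_circle {ε : ℝ} (hε : 0 < ε) (hε1 : ε ≤ 1) :
    ∃ V : Finset (EuclideanSpace ℝ (Fin 2)), (V.card : ℝ) ≤ 8 / ε ∧ (∀ v ∈ V, ‖v‖ = 1) ∧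
      ∀ u : EuclideanSpace ℝ (Fin 2), ‖u‖ = 1 → ∃ v ∈ V, ‖u - v‖ ≤ ε := by
  obtain ⟨V, hcard, hnorm, hnet⟩ := exists_net_complex_unit_circle hε hε1
  let e := Complex.orthonormalBasisOneI.repr
  refine ⟨V.map e.toEquiv.toEmbedding, by rwa [Finset.card_map], ?_, fun u hu => ?_⟩
  · exact Finset.forall_mem_map.2 fun v hv => (e.norm_map v).trans (hnorm v hv)
  · obtain ⟨v, hv, huv⟩ := hnet (e.symm u) (by rwa [e.symm.norm_map])
    refine ⟨e v, Finset.mem_map_of_mem _ hv, ?_⟩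
    rwa [← e.apply_symm_apply u, ← map_sub, e.norm_map]

end CircleNet

section Boxes

variable {E ι : Type*} [NormedAddCommGroup E] [InnerProductSpace ℝ E] [Fintype ι]

/-- The box with edges parallel to the vectors of an orthonormal basis, cut out by the bounds
`l i ≤ ⟪b i, x⟫ ≤ u i`. -/
def orthonormalBox (b : OrthonormalBasis ι ℝ E) (l u : ι → ℝ) : Set E :=
  {x | ∀ i, ⟪b i, x⟫ ∈ Icc (l i) (u i)}

lemma orthonormalBox_eq_preimage (b : OrthonormalBasis ι ℝ E) (l u : ι → ℝ) :
    orthonormalBox b l u = (WithLp.ofLp ∘ b.repr) ⁻¹' Icc l u := by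
  ext x
  simp [orthonormalBox, Pi.le_def, forall_and, OrthonormalBasis.repr_apply_apply]

variable [FiniteDimensional ℝ E]

lemma exists_orthonormalBasis_apply_eq (hι : Module.finrank ℝ E = Fintype.card ι) (i : ι) {v : E}
    (hv : ‖v‖ = 1) : ∃ b : OrthonormalBasis ι ℝ E, b i = v := by
  have hunit : Orthonormal ℝ (({i} : Set ι).domRestrict fun _ => v) :=
    ⟨fun _ => hv, fun j k hjk => absurd (Subsingleton.elim j k) hjk⟩
  obtain ⟨b, hb⟩ := hunit.exists_orthonormalBasis_extension_of_card_eq hι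
  exact ⟨b, hb i rfl⟩

variable [MeasurableSpace E] [BorelSpace E]

lemma measurableSet_orthonormalBox (b : OrthonormalBasis ι ℝ E) (l u : ι → ℝ) :
    MeasurableSet (orthonormalBox b l u) := by
  rw [orthonormalBox_eq_preimage]
  exact ((PiLp.volume_preserving_ofLp ι).comp b.measurePreserving_repr).measurable
    measurableSet_Icc

lemma volume_orthonormalBox (b : OrthonormalBasis ι ℝ E) (l u : ι → ℝ) :
    volume (orthonormalBox b l u) = ∏ i, ENNReal.ofReal (u i - l i) := by
  rw [orthonormalBox_eq_preimage, ← Real.volume_Icc_pi]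
  exact ((PiLp.volume_preserving_ofLp ι).comp b.measurePreserving_repr).measure_preimage
    measurableSet_Icc.nullMeasurableSet

lemma volume_orthonormalBox_fin_two (b : OrthonormalBasis (Fin 2) ℝ E) {l₀ u₀ : ℝ} (h₀ : l₀ ≤ u₀)
    (l₁ u₁ : ℝ) : volume (orthonormalBox b ![l₀, l₁] ![u₀, u₁]) =
      ENNReal.ofReal ((u₀ - l₀) * (u₁ - l₁)) := by
  rw [volume_orthonormalBox, Fin.prod_univ_two, ENNReal.ofReal_mul (sub_nonneg.2 h₀)]
  rfl

end Boxes

section BetaDensity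

/-- The value of the density of `betaMeasure β` at the points of norm `r`. -/
noncomputable def betaDensity (β r : ℝ) : ℝ :=
  if r ≤ 1 then (β + 1) / Real.pi * (1 - r ^ 2) ^ β else 0

lemma betaMeasure_eq_withDensity_betaDensity (β : ℝ) :
    betaMeasure β = volume.withDensity fun x => ENNReal.ofReal (betaDensity β ‖x‖) :=
  rfl

lemma measurable_betaDensity (β : ℝ) : Measurable (betaDensity β) :=
  Measurable.ite measurableSet_Iic (by fun_prop) measurable_const

lemma ae_betaMeasure_norm_le_one (β : ℝ) : ∀ᵐ x ∂betaMeasure β, ‖x‖ ≤ 1 := by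
  have hmeas : Measurable fun x : EuclideanSpace ℝ (Fin 2) => ENNReal.ofReal (betaDensity β ‖x‖) :=
    ((measurable_betaDensity β).comp measurable_norm).ennreal_ofReal
  rw [betaMeasure_eq_withDensity_betaDensity, ae_withDensity_iff hmeas]
  refine .of_forall fun x hx => ?_
  by_contra hnorm
  simp [betaDensity, hnorm] at hx

variable {β r : ℝ}

lemma betaDensity_nonneg (hβ : 0 ≤ β) (hr : 0 ≤ r) : 0 ≤ betaDensity β r := by
  rw [betaDensity]
  split_ifs with hr1
  · have := sub_nonneg.2 (pow_le_one₀ hr hr1 (n := 2))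
    positivity
  · exact le_rfl

lemma betaDensity_le (hβ : 0 ≤ β) (hr : 0 ≤ r) : betaDensity β r ≤ (β + 1) / Real.pi := by
  rw [betaDensity]
  split_ifs with hr1
  · exact mul_le_of_le_one_right (by positivity) <|
      Real.rpow_le_one (sub_nonneg.2 (pow_le_one₀ hr hr1)) (sub_le_self _ (sq_nonneg r)) hβ
  · positivity

lemma betaDensity_le_of_one_sub_le {h : ℝ} (hβ : 0 ≤ β) (hr : 0 ≤ r) (hr1 : r ≤ 1)
    (hrh : 1 - h ≤ r) : betaDensity β r ≤ (β + 1) / Real.pi * (2 * h) ^ β := by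
  rw [betaDensity, if_pos hr1]
  have hsq : 1 - r ^ 2 ≤ 2 * h := by nlinarith
  gcongr
  exact sub_nonneg.2 (pow_le_one₀ hr hr1)

lemma le_betaDensity_of_sq_le {t : ℝ} (hβ : 0 ≤ β) (ht : 0 ≤ t) (hrt : r ^ 2 ≤ 1 - t) :
    (β + 1) / Real.pi * t ^ β ≤ betaDensity β r := by
  rw [betaDensity, if_pos (abs_le_one_iff_mul_self_le_one.2 (by linarith [sq r]) |> le_of_abs_le)]
  gcongr
  linarith

lemma integral_mul_one_sub_sq_rpow (hβ : 0 ≤ β) :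
    ∫ y in (0 : ℝ)..1, y * (1 - y ^ 2) ^ β = 1 / (2 * (β + 1)) := by
  have hβ1 : β + 1 ≠ 0 := by positivity
  have hderiv (y : ℝ) : HasDerivAt (fun y : ℝ => -(1 - y ^ 2) ^ (β + 1) / (2 * (β + 1)))
      (y * (1 - y ^ 2) ^ β) y := by
    have hinner : HasDerivAt (fun y : ℝ => 1 - y ^ 2) (-(2 * y)) y := by
      simpa using (hasDerivAt_pow 2 y).const_sub 1
    refine ((hinner.rpow_const (p := β + 1) (Or.inr (by linarith))).neg.div_const
      (2 * (β + 1))).congr_deriv ?_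
    rw [add_sub_cancel_right]
    field_simp
  have hcont : Continuous fun y : ℝ => y * (1 - y ^ 2) ^ β :=
    continuous_id.mul (Continuous.rpow_const (by fun_prop) fun _ => Or.inr hβ)
  rw [intervalIntegral.integral_eq_sub_of_hasDerivAt (fun y _ => hderiv y)
    (hcont.intervalIntegrable _ _)]
  simp [Real.zero_rpow hβ1, neg_div]

lemma integral_Ioi_mul_betaDensity (hβ : 0 ≤ β) :
    ∫ r in Ioi (0 : ℝ), r * betaDensity β r = 1 / (2 * Real.pi) := by
  have hindicator : EqOn (fun r => r * betaDensity β r)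
      ((Ioc 0 1).indicator fun r => (β + 1) / Real.pi * (r * (1 - r ^ 2) ^ β)) (Ioi 0) := by
    intro r (hr : 0 < r)
    simp only [betaDensity, indicator, mem_Ioc, hr, true_and]
    split_ifs <;> ring
  rw [setIntegral_congr_fun measurableSet_Ioi hindicator, setIntegral_indicator measurableSet_Ioc,
    inter_eq_right.2 Ioc_subset_Ioi_self, ← intervalIntegral.integral_of_le zero_le_one,
    intervalIntegral.integral_const_mul, integral_mul_one_sub_sq_rpow hβ]
  field_simp

lemma integrable_betaDensity_norm (hβ : 0 ≤ β) :
    Integrable fun x : EuclideanSpace ℝ (Fin 2) => betaDensity β ‖x‖ := by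
  have hsupp : Function.support (fun x : EuclideanSpace ℝ (Fin 2) => betaDensity β ‖x‖) ⊆
      Metric.closedBall 0 1 := by
    intro x hx
    by_contra hball
    simp only [mem_closedBall_zero_iff] at hball
    simp [betaDensity, hball] at hx
  rw [← integrableOn_iff_integrable_of_support_subset hsupp]
  refine Measure.integrableOn_of_bounded (M := (β + 1) / Real.pi) measure_closedBall_lt_top.ne
    ((measurable_betaDensity β).comp measurable_norm).aestronglyMeasurable (.of_forall fun x => ?_)
  rw [Real.norm_of_nonneg (betaDensity_nonneg hβ (norm_nonneg x))]
  exact betaDensity_le hβ (norm_nonneg x)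

lemma isProbabilityMeasure_betaMeasure (hβ : 0 ≤ β) : IsProbabilityMeasure (betaMeasure β) := by
  refine ⟨?_⟩
  rw [betaMeasure_eq_withDensity_betaDensity, withDensity_apply _ .univ, Measure.restrict_univ,
    ← ofReal_integral_eq_lintegral_ofReal (integrable_betaDensity_norm hβ)
      (.of_forall fun x => betaDensity_nonneg hβ (norm_nonneg x)), integral_fun_norm_addHaar]
  have hball : (volume : Measure (EuclideanSpace ℝ (Fin 2))).real (Metric.ball 0 1) = Real.pi := by
    simp [measureReal_def, EuclideanSpace.volume_ball_fin_two, Real.pi_pos.le]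
  simp only [finrank_euclideanSpace_fin, Nat.reduceSub, pow_one, smul_eq_mul,
    integral_Ioi_mul_betaDensity hβ, hball]
  simp

end BetaDensity

section BetaEstimates

variable {β h : ℝ}

lemma rpow_mul_mul_sqrt (hh : 0 < h) (β : ℝ) : h ^ β * (h * √h) = h ^ (β + 3 / 2) := by
  rw [Real.sqrt_eq_rpow, ← Real.rpow_one_add' hh.le (by norm_num), ← Real.rpow_add hh]
  norm_num

lemma betaMeasure_le_of_subset_outerAnnulus (hβ : 0 ≤ β) {S : Set (EuclideanSpace ℝ (Fin 2))}
    (hS : S ⊆ outerAnnulus _ h) :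
    betaMeasure β S ≤ ENNReal.ofReal ((β + 1) / Real.pi * (2 * h) ^ β) * volume S := by
  rw [betaMeasure_eq_withDensity_betaDensity, withDensity_apply', ← setLIntegral_const]
  exact setLIntegral_mono measurable_const fun x hx => ENNReal.ofReal_le_ofReal <|
    betaDensity_le_of_one_sub_le hβ (norm_nonneg x) (hS hx).2 (hS hx).1

lemma volume_outerAnnulus_le (hh : 0 ≤ h) (hh1 : h ≤ 1) :
    volume (outerAnnulus (EuclideanSpace ℝ (Fin 2)) h) ≤ ENNReal.ofReal (2 * Real.pi * h) := by
  have hdiff : outerAnnulus (EuclideanSpace ℝ (Fin 2)) h =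
      Metric.closedBall 0 1 \ Metric.ball 0 (1 - h) := by
    ext x
    simp [outerAnnulus, and_comm]
  rw [hdiff, measure_sdiff (Metric.ball_subset_closedBall.trans
      (Metric.closedBall_subset_closedBall (by linarith)))
    Metric.isOpen_ball.measurableSet.nullMeasurableSet measure_ball_lt_top.ne,
    EuclideanSpace.volume_closedBall_fin_two, EuclideanSpace.volume_ball_fin_two,
    ← ENNReal.ofReal_pow (by linarith), ← ENNReal.ofReal_pow (by linarith),
    ← ENNReal.ofReal_mul (by positivity), ← ENNReal.ofReal_mul (by positivity),
    ← ENNReal.ofReal_sub _ (by positivity)]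
  refine ENNReal.ofReal_le_ofReal ?_
  nlinarith [mul_nonneg Real.pi_pos.le (sq_nonneg h)]

lemma betaMeasure_outerAnnulus_le (hβ : 0 ≤ β) (hh : 0 < h) (hh1 : h ≤ 1) :
    (betaMeasure β).real (outerAnnulus _ h) ≤ 2 * (β + 1) * 2 ^ β * h ^ (β + 1) := by
  refine ENNReal.toReal_le_of_le_ofReal (by positivity) ?_
  calc betaMeasure β (outerAnnulus _ h)
      ≤ ENNReal.ofReal ((β + 1) / Real.pi * (2 * h) ^ β) * ENNReal.ofReal (2 * Real.pi * h) := by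
        refine (betaMeasure_le_of_subset_outerAnnulus hβ subset_rfl).trans ?_
        gcongr
        exact volume_outerAnnulus_le hh.le hh1
    _ = ENNReal.ofReal (2 * (β + 1) * 2 ^ β * h ^ (β + 1)) := by
        rw [← ENNReal.ofReal_mul (by positivity), Real.mul_rpow zero_le_two hh.le,
          Real.rpow_add_one hh.ne']
        congr 1
        field_simp

lemma closePairs_section_subset_orthonormalBox (hh : 0 ≤ h) (hh6 : h ≤ 1 / 6)
    {x : EuclideanSpace ℝ (Fin 2)} (hx : x ∈ outerAnnulus _ h)
    {b : OrthonormalBasis (Fin 2) ℝ (EuclideanSpace ℝ (Fin 2))} (hb : b 0 = ‖x‖⁻¹ • x) :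
    Prod.mk x ⁻¹' closePairs _ h ⊆ orthonormalBox b ![1 - 6 * h, -(4 * √h)] ![1, 4 * √h] := by
  rintro y ⟨-, hy, hxy⟩
  have hx0 : 0 < ‖x‖ := by linarith [hx.1]
  have hinner : 1 - 6 * h ≤ ⟪x, y⟫ := by nlinarith [norm_sub_sq_real x y, hx.1, hy.1]
  have hscale : ⟪x, y⟫ ≤ ⟪b 0, y⟫ := by
    rw [hb, real_inner_smul_left]
    exact le_mul_of_one_le_left (by linarith) ((one_le_inv₀ hx0).2 hx.2)
  have hb0 : ⟪b 0, y⟫ ≤ 1 := by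
    simpa [b.norm_eq_one] using (real_inner_le_norm (b 0) y).trans
      (mul_le_of_le_one_right (norm_nonneg _) hy.2)
  have hpythagoras : ⟪b 0, y⟫ ^ 2 + ⟪b 1, y⟫ ^ 2 = ‖y‖ ^ 2 := by
    simpa [Fin.sum_univ_two] using b.sum_sq_norm_inner_right y
  have hb1 : ⟪b 1, y⟫ ^ 2 ≤ (4 * √h) ^ 2 := by
    rw [mul_pow, Real.sq_sqrt hh]
    nlinarith [hy.2, norm_nonneg y]
  rw [orthonormalBox, mem_ofPred_eq, Fin.forall_fin_two]
  exact ⟨⟨hinner.trans hscale, hb0⟩, abs_le.1 (abs_le_of_sq_le_sq hb1 (by positivity))⟩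

lemma betaMeasure_closePairs_section_le (hβ : 0 ≤ β) (hh : 0 < h) (hh6 : h ≤ 1 / 6)
    {x : EuclideanSpace ℝ (Fin 2)} (hx : x ∈ outerAnnulus _ h) :
    (betaMeasure β).real (Prod.mk x ⁻¹' closePairs _ h) ≤
      (β + 1) / Real.pi * 2 ^ β * 48 * h ^ (β + 3 / 2) := by
  have hx0 : x ≠ 0 := norm_pos_iff.1 (by linarith [hx.1])
  obtain ⟨b, hb⟩ := exists_orthonormalBasis_apply_eq (ι := Fin 2) (by simp) 0
    (norm_smul_inv_norm (𝕜 := ℝ) hx0)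
  refine ENNReal.toReal_le_of_le_ofReal (by positivity) ?_
  calc betaMeasure β (Prod.mk x ⁻¹' closePairs _ h)
      ≤ ENNReal.ofReal ((β + 1) / Real.pi * (2 * h) ^ β) *
          volume (orthonormalBox b ![1 - 6 * h, -(4 * √h)] ![1, 4 * √h]) := by
        refine (betaMeasure_le_of_subset_outerAnnulus hβ fun y hy => hy.2.1).trans ?_
        gcongr
        exact closePairs_section_subset_orthonormalBox hh.le hh6 hx hb
    _ = ENNReal.ofReal ((β + 1) / Real.pi * 2 ^ β * 48 * h ^ (β + 3 / 2)) := by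
        rw [volume_orthonormalBox_fin_two b (by linarith), ← ENNReal.ofReal_mul (by positivity),
          Real.mul_rpow zero_le_two hh.le, ← rpow_mul_mul_sqrt hh]
        congr 1
        ring

lemma norm_sq_le_of_mem_orthonormalBox {t : ℝ} (ht : 0 ≤ t) (ht1 : t ≤ 1)
    {b : OrthonormalBasis (Fin 2) ℝ (EuclideanSpace ℝ (Fin 2))} {x : EuclideanSpace ℝ (Fin 2)}
    (hx : x ∈ orthonormalBox b ![1 - t, -(√t / 2)] ![1 - t / 2, √t / 2]) :
    ‖x‖ ^ 2 ≤ 1 - t / 2 := by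
  have h0 : ⟪b 0, x⟫ ^ 2 ≤ (1 - t / 2) ^ 2 :=
    pow_le_pow_left₀ ((sub_nonneg.2 ht1).trans (hx 0).1) (hx 0).2 2
  have h1 : ⟪b 1, x⟫ ^ 2 ≤ t / 4 := by
    calc ⟪b 1, x⟫ ^ 2 ≤ (√t / 2) ^ 2 := sq_le_sq' (hx 1).1 (hx 1).2
      _ = t / 4 := by rw [div_pow, Real.sq_sqrt ht]; norm_num
  have hpythagoras : ⟪b 0, x⟫ ^ 2 + ⟪b 1, x⟫ ^ 2 = ‖x‖ ^ 2 := by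
    simpa [Fin.sum_univ_two] using b.sum_sq_norm_inner_right x
  nlinarith

lemma le_betaMeasure_cap (hβ : 0 ≤ β) {t : ℝ} (ht : 0 < t) (ht1 : t ≤ 1)
    {v : EuclideanSpace ℝ (Fin 2)} (hv : ‖v‖ = 1) :
    (β + 1) / Real.pi / (2 * 2 ^ β) * t ^ (β + 3 / 2) ≤
      (betaMeasure β).real {x | 1 - t ≤ ⟪v, x⟫} := by
  have := isProbabilityMeasure_betaMeasure hβ
  obtain ⟨b, rfl⟩ := exists_orthonormalBasis_apply_eq (ι := Fin 2) (by simp) 0 hv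
  let box := orthonormalBox b ![1 - t, -(√t / 2)] ![1 - t / 2, √t / 2]
  refine le_trans ?_ (measureReal_mono (show box ⊆ _ from fun x hx => (hx 0).1))
  rw [measureReal_def, ← ENNReal.ofReal_le_iff_le_toReal (measure_ne_top _ _)]
  calc ENNReal.ofReal ((β + 1) / Real.pi / (2 * 2 ^ β) * t ^ (β + 3 / 2))
      = ∫⁻ _ in box, ENNReal.ofReal ((β + 1) / Real.pi * (t / 2) ^ β) := by
        rw [setLIntegral_const, volume_orthonormalBox_fin_two b (by linarith),
          ← ENNReal.ofReal_mul (by positivity), Real.div_rpow ht.le zero_le_two,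
          ← rpow_mul_mul_sqrt ht]
        congr 1
        ring
    _ ≤ betaMeasure β box := by
        rw [betaMeasure_eq_withDensity_betaDensity, withDensity_apply']
        refine setLIntegral_mono' (measurableSet_orthonormalBox _ _ _) fun x hx =>
          ENNReal.ofReal_le_ofReal <|
            le_betaDensity_of_sq_le hβ (by positivity)
              (norm_sq_le_of_mem_orthonormalBox ht.le ht1 hx)

end BetaEstimates

section CapHeight

/-- The height of the caps used for `n` points when a cap of height `h` has mass of order `h ^ γ`:
it solves `n * h ^ γ = K * log n`, so that such caps are empty with probability at most a power of
`1 / n` governed by `K`. -/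
noncomputable def capHeight (K γ : ℝ) (n : ℕ) : ℝ :=
  (K * Real.log n / n) ^ (1 / γ)

variable {K γ δ a b p : ℝ} {n : ℕ}

lemma capHeight_rpow_mul (hK : 0 ≤ K) (hγ : γ ≠ 0) (s : ℝ) :
    capHeight K γ n ^ (s * γ) = (K * Real.log n / n) ^ s := by
  have := Real.log_natCast_nonneg n
  rw [capHeight, ← Real.rpow_mul (by positivity)]
  congr 1
  field_simp

lemma natCast_mul_capHeight_rpow (hK : 0 ≤ K) (hγ : γ ≠ 0) (hn : n ≠ 0) :
    n * capHeight K γ n ^ γ = K * Real.log n := by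
  have h := capHeight_rpow_mul (n := n) hK hγ 1
  rw [one_mul, Real.rpow_one] at h
  rw [h]
  field_simp

lemma inv_le_capHeight (hK : 1 ≤ K) (hγ : 1 ≤ γ) (hn : 1 ≤ Real.log n) :
    (n : ℝ)⁻¹ ≤ capHeight K γ n := by
  have hn0 : n ≠ 0 := by rintro rfl; norm_num at hn
  have hn1 : (1 : ℝ) ≤ n := Nat.one_le_cast.2 (Nat.one_le_iff_ne_zero.2 hn0)
  calc (n : ℝ)⁻¹ = (n : ℝ)⁻¹ ^ (1 : ℝ) := (Real.rpow_one _).symm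
    _ ≤ (n : ℝ)⁻¹ ^ (1 / γ) :=
        Real.rpow_le_rpow_of_exponent_ge (by positivity) (inv_le_one_of_one_le₀ hn1)
          ((div_le_one (by linarith)).2 hγ)
    _ ≤ capHeight K γ n := by
        rw [capHeight, inv_eq_one_div]
        gcongr
        exact one_le_mul_of_one_le_of_one_le hK hn

lemma tendsto_capHeight (hγ : 0 < γ) :
    Filter.Tendsto (capHeight K γ) Filter.atTop (nhds 0) := by
  have hlog : Filter.Tendsto (fun n : ℕ => Real.log n / n) Filter.atTop (nhds 0) :=
    Real.isLittleO_log_id_atTop.tendsto_div_nhds_zero.comp tendsto_natCast_atTop_atTop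
  have hbase : Filter.Tendsto (fun n : ℕ => K * Real.log n / n) Filter.atTop (nhds 0) := by
    simpa only [mul_zero, mul_div_assoc] using hlog.const_mul K
  have hexp : 0 < 1 / γ := by positivity
  unfold capHeight
  simpa only [Real.zero_rpow hexp.ne'] using hbase.rpow_const (Or.inr hexp.le)

lemma capHeight_main_term_le (hK : 0 ≤ K) (hγ : γ ≠ 0) (ha : 0 ≤ a) (hb : 0 ≤ b)
    (hn : 1 ≤ Real.log n) :
    n * (a * capHeight K γ n ^ ((1 - δ) * γ) * (2 + 2 * (n * (b * capHeight K γ n ^ γ) +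
        (n * (b * capHeight K γ n ^ γ)) ^ 2))) ≤
      a * K ^ (1 - δ) * (2 + 2 * (b * K + (b * K) ^ 2)) *
        (Real.log n ^ (3 - δ) * (n : ℝ) ^ δ) := by
  have hn0 : n ≠ 0 := by rintro rfl; norm_num at hn
  have hnpos : (0 : ℝ) < n := Nat.cast_pos.2 (Nat.pos_of_ne_zero hn0)
  have hmean : n * (b * capHeight K γ n ^ γ) = b * K * Real.log n := by
    rw [mul_left_comm, natCast_mul_capHeight_rpow hK hγ hn0, mul_assoc]
  rw [hmean, capHeight_rpow_mul hK hγ]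
  set L := Real.log n
  have hL0 : 0 < L := by linarith
  have hcount : 2 + 2 * (b * K * L + (b * K * L) ^ 2) ≤
      (2 + 2 * (b * K + (b * K) ^ 2)) * L ^ 2 := by
    have hLsq : L ≤ L ^ 2 := le_self_pow₀ hn two_ne_zero
    have hlinear : b * K * L ≤ b * K * L ^ 2 := by gcongr
    nlinarith
  have hpow : n * (K * L / n) ^ (1 - δ) * L ^ 2 = K ^ (1 - δ) * (L ^ (3 - δ) * (n : ℝ) ^ δ) := by
    rw [Real.div_rpow (by positivity) hnpos.le, Real.mul_rpow hK hL0.le,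
      show 3 - δ = 1 - δ + (2 : ℕ) by push_cast; ring, Real.rpow_add_natCast hL0.ne',
      Real.rpow_sub hnpos 1 δ, Real.rpow_one]
    field_simp
  calc n * (a * (K * L / n) ^ (1 - δ) * (2 + 2 * (b * K * L + (b * K * L) ^ 2)))
      ≤ n * (a * (K * L / n) ^ (1 - δ) * ((2 + 2 * (b * K + (b * K) ^ 2)) * L ^ 2)) := by gcongr
    _ = a * (2 + 2 * (b * K + (b * K) ^ 2)) * (n * (K * L / n) ^ (1 - δ) * L ^ 2) := by ring
    _ = _ := by rw [hpow]; ring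

lemma capHeight_error_term_le (hK : 1 ≤ K) (hγ : 1 ≤ γ) (hpK : 8 * 2 ^ γ ≤ p * K)
    (hn : 1 ≤ Real.log n) :
    16 * (n : ℝ) ^ 3 / capHeight K γ n *
      Real.exp (-(n * (p * (capHeight K γ n / 2) ^ γ) / 2)) ≤ 16 := by
  have hn0 : n ≠ 0 := by rintro rfl; norm_num at hn
  have hnpos : (0 : ℝ) < n := Nat.cast_pos.2 (Nat.pos_of_ne_zero hn0)
  have hinv := inv_le_capHeight hK hγ hn
  have hhpos : 0 < capHeight K γ n := (inv_pos.2 hnpos).trans_le hinv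
  have hmean : n * (p * (capHeight K γ n / 2) ^ γ) / 2 = p * K / (2 * 2 ^ γ) * Real.log n := by
    have := natCast_mul_capHeight_rpow (n := n) (zero_le_one.trans hK) (by linarith : γ ≠ 0) hn0
    rw [Real.div_rpow hhpos.le zero_le_two]
    field_simp
    linear_combination p * this
  have hexp : Real.exp (-(n * (p * (capHeight K γ n / 2) ^ γ) / 2)) ≤ ((n : ℝ) ^ 4)⁻¹ := by
    rw [hmean, ← Real.exp_log (pow_pos hnpos 4), ← Real.exp_neg, Real.log_pow]
    gcongr
    rw [le_div_iff₀ (by positivity)]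
    push_cast
    linarith
  calc _ ≤ 16 * (n : ℝ) ^ 3 * n * ((n : ℝ) ^ 4)⁻¹ := by
        rw [div_eq_mul_inv]
        gcongr
        exact inv_le_of_inv_le₀ hnpos hinv
    _ = 16 := by field_simp

end CapHeight

section Asymptotics

lemma one_sub_pow_le_exp {x : ℝ} (hx : 0 ≤ x) (hx1 : x ≤ 1) {n : ℕ} (hn : 2 ≤ n) :
    (1 - x) ^ (n - 1) ≤ Real.exp (-(n * x / 2)) := by
  have hn2 : (2 : ℝ) ≤ n := by exact_mod_cast hn
  calc (1 - x) ^ (n - 1) ≤ Real.exp (-x) ^ (n - 1) :=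
        pow_le_pow_left₀ (sub_nonneg.2 hx1) (Real.one_sub_le_exp_neg x) _
    _ = Real.exp (-((n - 1) * x)) := by
        rw [← Real.exp_nat_mul, Nat.cast_pred (by lia), mul_neg]
    _ ≤ Real.exp (-(n * x / 2)) := by
        gcongr
        nlinarith

variable {μ : Measure (EuclideanSpace ℝ (Fin 2))} [IsProbabilityMeasure μ] {a b p γ δ : ℝ}

lemma variance_vertexNumber_le_add_exp (hμ : ∀ᵐ x ∂μ, ‖x‖ ≤ 1) {n : ℕ} (hn : 2 ≤ n) {h : ℝ}
    (hh : 0 < h) (hh2 : h ≤ 2) (ha : μ.real (outerAnnulus _ h) ≤ a) (hb : 0 ≤ b)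
    (hclose : ∀ x ∈ outerAnnulus _ h, μ.real (Prod.mk x ⁻¹' closePairs _ h) ≤ b) (hp : 0 ≤ p)
    (hcap : ∀ v : EuclideanSpace ℝ (Fin 2), ‖v‖ = 1 → p ≤ μ.real {x | 1 - h / 2 ≤ ⟪v, x⟫}) :
    Var[fun ω : Fin n → EuclideanSpace ℝ (Fin 2) => vertexNumber (range ω);
        Measure.pi fun _ => μ] ≤
      n * (a * (2 + 2 * (n * b + (n * b) ^ 2))) +
        16 * (n : ℝ) ^ 3 / h * Real.exp (-(n * p / 2)) := by
  obtain ⟨V, hVcard, hVnorm, hVnet⟩ := exists_net_unit_circle (half_pos hh) (by linarith)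
  obtain ⟨v, hv⟩ := exists_norm_eq (EuclideanSpace ℝ (Fin 2)) zero_le_one
  have hp1 : p ≤ 1 := (hcap v hv).trans measureReal_le_one
  calc _ ≤ n * (μ.real (outerAnnulus _ h) * (2 + 2 * (n * b + (n * b) ^ 2)) +
          V.card * (1 - p) ^ (n - 1) * n ^ 2) :=
        variance_vertexNumber_le hμ hclose hVnet fun v hv => hcap v (hVnorm v hv)
    _ ≤ n * (a * (2 + 2 * (n * b + (n * b) ^ 2)) +
          8 / (h / 2) * Real.exp (-(n * p / 2)) * n ^ 2) := by
        gcongr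
        exact one_sub_pow_le_exp hp hp1 hn
    _ = _ := by
        field_simp
        ring

/-- Taking caps of height `h` with `n * h ^ γ` of order `log n`, the annulus of width `h`
contributes `n * h ^ ((1 - δ) * γ)` influential points, each with a second moment of order
`(log n) ^ 2`. -/
theorem exists_variance_vertexNumber_le (hμ : ∀ᵐ x ∂μ, ‖x‖ ≤ 1) (hγ : 1 ≤ γ) (hδ : 0 ≤ δ)
    (hδ3 : δ ≤ 3) (ha : 0 ≤ a) (hb : 0 ≤ b) (hp : 0 < p) {r : ℝ} (hr : 0 < r)
    (hannulus : ∀ h, 0 < h → h ≤ r → μ.real (outerAnnulus _ h) ≤ a * h ^ ((1 - δ) * γ))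
    (hclose : ∀ h, 0 < h → h ≤ r → ∀ x ∈ outerAnnulus _ h,
      μ.real (Prod.mk x ⁻¹' closePairs _ h) ≤ b * h ^ γ)
    (hcap : ∀ h, 0 < h → h ≤ r → ∀ v : EuclideanSpace ℝ (Fin 2), ‖v‖ = 1 →
      p * h ^ γ ≤ μ.real {x | 1 - h ≤ ⟪v, x⟫}) :
    ∃ c : ℝ, 0 < c ∧ ∀ᶠ n : ℕ in Filter.atTop,
      Var[fun ω : Fin n → EuclideanSpace ℝ (Fin 2) => vertexNumber (range ω);
        Measure.pi fun _ => μ] ≤ c * Real.log n ^ (3 - δ) * (n : ℝ) ^ δ := by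
  let K := max 1 (8 * 2 ^ γ / p)
  have hK : 1 ≤ K := le_max_left _ _
  have hpK : 8 * 2 ^ γ ≤ p * K := (div_le_iff₀' hp).1 (le_max_right _ _)
  let c := a * K ^ (1 - δ) * (2 + 2 * (b * K + (b * K) ^ 2))
  have hsmall : ∀ᶠ n in Filter.atTop, capHeight K γ n < min r 2 :=
    (tendsto_capHeight (by linarith)).eventually_lt_const (by positivity)
  have hlog : ∀ᶠ n : ℕ in Filter.atTop, 1 ≤ Real.log n :=
    (Real.tendsto_log_atTop.comp tendsto_natCast_atTop_atTop).eventually_ge_atTop 1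
  refine ⟨c + 16, by positivity, ?_⟩
  filter_upwards [hsmall, hlog, Filter.eventually_ge_atTop 2] with n hhr hL hn
  have hn1 : (1 : ℝ) ≤ n := by exact_mod_cast one_le_two.trans hn
  set h := capHeight K γ n
  have hh : 0 < h := (inv_pos.2 (zero_lt_one.trans_le hn1)).trans_le (inv_le_capHeight hK hγ hL)
  obtain ⟨hhr, hh2⟩ := lt_min_iff.1 hhr
  have hgrowth : 1 ≤ Real.log n ^ (3 - δ) * (n : ℝ) ^ δ :=
    one_le_mul_of_one_le_of_one_le (Real.one_le_rpow hL (by linarith)) (Real.one_le_rpow hn1 hδ)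
  calc _ ≤ _ := variance_vertexNumber_le_add_exp hμ hn hh hh2.le (hannulus h hh hhr.le)
          (by positivity) (hclose h hh hhr.le) (p := p * (h / 2) ^ γ) (by positivity)
          (hcap (h / 2) (by positivity) (by linarith))
    _ ≤ c * (Real.log n ^ (3 - δ) * (n : ℝ) ^ δ) + 16 :=
        add_le_add (capHeight_main_term_le (zero_le_one.trans hK) (by linarith) ha hb hL)
          (capHeight_error_term_le hK hγ hpK hL)
    _ ≤ (c + 16) * Real.log n ^ (3 - δ) * (n : ℝ) ^ δ := by linarith

end Asymptotics

section VarF0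

lemma varF0_eq_variance {β : ℝ} (hβ : 0 ≤ β) (n : ℕ) :
    varF0 β n = Var[fun ω : Fin n → EuclideanSpace ℝ (Fin 2) => vertexNumber (range ω);
      Measure.pi fun _ => betaMeasure β] := by
  have := isProbabilityMeasure_betaMeasure hβ
  have hcount (ω : Fin n → EuclideanSpace ℝ (Fin 2)) : vertCount ω = vertexNumber (range ω) :=
    congrArg Nat.cast (Nat.card_coe_set_eq _)
  simp only [ProbabilityTheory.variance_eq_sub memLp_two_vertexNumber_range, varF0, meanF0, hcount,
    betaPi, Pi.pow_apply]

end VarF0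

theorem variance_vertex_count_upper_general {β : ℝ} (hβ : 0 ≤ β) :
    ∃ c : ℝ, 0 < c ∧ ∃ N : ℕ, ∀ n : ℕ, N ≤ n →
      varF0 β n ≤
        c * Real.log n ^ (3 - 1 / (2 * β + 3)) * (n : ℝ) ^ (1 / (2 * β + 3)) := by
  have := isProbabilityMeasure_betaMeasure hβ
  have hexponent : (1 - 1 / (2 * β + 3)) * (β + 3 / 2) = β + 1 := by
    field_simp
    ring
  obtain ⟨c, hc, hbound⟩ := exists_variance_vertexNumber_le (ae_betaMeasure_norm_le_one β)
    (γ := β + 3 / 2) (δ := 1 / (2 * β + 3)) (a := 2 * (β + 1) * 2 ^ β)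
    (b := (β + 1) / Real.pi * 2 ^ β * 48) (p := (β + 1) / Real.pi / (2 * 2 ^ β)) (r := 1 / 6)
    (by linarith) (by positivity) ((div_le_iff₀ (by positivity)).2 (by linarith)) (by positivity)
    (by positivity) (by positivity) (by norm_num)
    (fun h hh hh6 => hexponent ▸ betaMeasure_outerAnnulus_le hβ hh (by linarith))
    (fun h hh hh6 x => betaMeasure_closePairs_section_le hβ hh hh6)
    (fun h hh hh6 v => le_betaMeasure_cap hβ hh (by linarith))
  refine ⟨c, hc, Filter.eventually_atTop.1 ?_⟩
  simpa only [varF0_eq_variance hβ] using hbound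

/-- upper bound for the variance of the vertex count. For `d ≥ 4` and
`β = d/2 - 2`, there are `c > 0` and `N` such that
`Var(f₀(Qₙ)) ≤ c·(log n)^{3 - 1/(d-1)}·n^{1/(d-1)}` for all `n ≥ N`. -/
theorem variance_vertex_count_upper (d : ℕ) (hd : 4 ≤ d)
    (β : ℝ) (hβ : β = (d : ℝ) / 2 - 2) :
    ∃ c : ℝ, 0 < c ∧ ∃ N : ℕ, ∀ n : ℕ, N ≤ n →
      varF0 β n ≤
        c * Real.log n ^ (3 - 1 / ((d : ℝ) - 1)) * (n : ℝ) ^ (1 / ((d : ℝ) - 1)) := by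
  have hd' : (4 : ℝ) ≤ d := by exact_mod_cast hd
  rw [show (d : ℝ) - 1 = 2 * β + 3 by rw [hβ]; ring]
  exact variance_vertex_count_upper_general (by linarith)
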